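/- Set R_n(x) = L(x)^T·P_n(x)·Γ_n^{-1}. Then conjugation by L^T decouples the first matrix q-difference operator: for every n ∈ ℕ and every z ∈ ℂ with z ∉ {0,1,-1}, K_1(z)·R_n(μ(qz)) + K_1(z⁻¹)·R_n(μ(q⁻¹z)) = R_n(μ(z))·Λ_n(1), where μ(w) = (w+w⁻¹)/2 and K_1(z) is the diagonal matrix K_1(z) = Σ_{i=0}^{2ℓ} [q^{1-i}/(1-q²)²]·[(1-q^{2i+2}z²)/(1-z²)]·E_{i,i}. -/

import Mathlib

open Finset Polynomial MeasureTheory Matrix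
open scoped BigOperators ComplexOrder

noncomputable section

/-- q-shifted factorial `(a;p)_n`. -/
def qp (a p : ℂ) (n : ℕ) : ℂ := ∏ j ∈ Finset.range n, (1 - a * p ^ j)

/-- q-Racah polynomial `R_n(μ(x);α,β,γ,δ;p)`. -/
def qRacah (p α β γ δ : ℂ) (n x : ℕ) : ℂ :=
  ∑ k ∈ Finset.range (min n x + 1),
    qp (p ^ (-(n : ℤ))) p k * qp (α * β * p ^ (n + 1)) p k *
        qp (p ^ (-(x : ℤ))) p k * qp (γ * δ * p ^ (x + 1)) p k /
      (qp (α * p) p k * qp (β * δ * p) p k * qp (γ * p) p k * qp p p k) * p ^ k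

/-- `IsUltra C` says that for each base `p`, parameter `β` and degree `n`, `C p β n` is
the continuous q-ultraspherical polynomial: it has degree at most `n` and its values at
`(z+z⁻¹)/2` are given by the symmetric Laurent sum. -/
def IsUltra (C : ℂ → ℂ → ℕ → Polynomial ℂ) : Prop :=
  ∀ (p β : ℂ) (n : ℕ),
    (C p β n).degree ≤ (n : ℕ) ∧
      ∀ z : ℂ, z ≠ 0 →
        (C p β n).eval ((z + z⁻¹) / 2) =
          ∑ r ∈ Finset.range (n + 1),
            qp β p r * qp β p (n - r) / (qp p p r * qp p p (n - r)) * z ^ ((n : ℤ) - 2 * r)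

/-- The matrix-valued polynomial `P_n` (entries in `Polynomial ℂ`); here `L = 2ℓ`. -/
def Pm (q : ℂ) (L : ℕ) (C : ℂ → ℂ → ℕ → Polynomial ℂ) (n : ℕ) :
    Matrix (Fin (L + 1)) (Fin (L + 1)) (Polynomial ℂ) :=
  Matrix.of fun i j =>
    ∑ k ∈ Finset.Icc (i : ℕ) (min L (n + (j : ℕ))),
      Polynomial.C
          ((-1 : ℂ) ^ k *
            q ^ ((n : ℤ) + (2 * (k : ℤ) + 1) * ((k : ℤ) - ((i : ℕ) : ℤ)) +
                ((j : ℕ) : ℤ) * (2 * (k : ℤ) + 1) + 2 * (k : ℤ) * ((L : ℤ) + (n : ℤ) + 1) -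
                (k : ℤ) ^ 2) *
            (qp (q ^ 2) (q ^ 2) k * qp (q ^ 2) (q ^ 2) (k + (i : ℕ)) /
              (qp (q ^ 2) (q ^ 2) (2 * k) * qp (q ^ 2) (q ^ 2) (i : ℕ))) *
            (qp (q ^ (-(2 * (L : ℤ)))) (q ^ 2) k *
                qp (q ^ (-(2 * ((j : ℕ) : ℤ) + 2 * (n : ℤ)))) (q ^ 2) k /
              (qp (q ^ 2) (q ^ 2) k * qp (q ^ (2 * (L : ℤ) + 4)) (q ^ 2) k)) *
            (qp (q ^ 2) (q ^ 2) (n + (j : ℕ) - k) /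
              qp (q ^ (4 * (k : ℤ) + 4)) (q ^ 2) (n + (j : ℕ) - k)) *
            qRacah (q ^ 2) 1 1 (q ^ (-(2 * (n : ℤ) + 2 * ((j : ℕ) : ℤ) + 2)))
              (q ^ (-(2 * (L : ℤ) + 2))) k (j : ℕ)) *
        (C (q ^ 2) (q ^ (-(2 * (k : ℤ)))) (k - (i : ℕ)) *
          C (q ^ 2) (q ^ (2 * (k : ℤ) + 2)) (n + (j : ℕ) - k))

/-- Evaluation of the matrix-valued polynomial `P_n` at a point. -/
def evP (q : ℂ) (L : ℕ) (C : ℂ → ℂ → ℕ → Polynomial ℂ) (n : ℕ) (x : ℂ) :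
    Matrix (Fin (L + 1)) (Fin (L + 1)) ℂ :=
  (Pm q L C n).map (Polynomial.eval x)

/-- The coefficients `α_t(m,n)` of the weight. -/
def alphaC (q : ℂ) (L m n t : ℕ) : ℂ :=
  q ^ (2 * (n : ℤ) * ((L : ℤ) + 1) - (n : ℤ) ^ 2 - (2 * (L : ℤ) + 3) * (t : ℤ) + (t : ℤ) ^ 2 -
      (L : ℤ) + (m : ℤ)) *
    ((1 - q ^ (2 * (L : ℤ) + 2)) / (1 - q ^ (2 * (m : ℤ) + 2))) *
    (qp (q ^ 2) (q ^ 2) (L - n) * qp (q ^ 2) (q ^ 2) n / qp (q ^ 2) (q ^ 2) L) *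
    ((-1 : ℂ) ^ ((m : ℤ) - (t : ℤ)) * qp (q ^ (2 * (m : ℤ) - 2 * (L : ℤ))) (q ^ 2) (n - t) /
      qp (q ^ (2 * (m : ℤ) + 4)) (q ^ 2) (n - t)) *
    (qp (q ^ (2 * (L : ℤ) + 4 - 2 * (t : ℤ))) (q ^ 2) t / qp (q ^ 2) (q ^ 2) t)

/-- The matrix weight `W(x)`. -/
def Wm (q : ℂ) (L : ℕ) (x : ℂ) : Matrix (Fin (L + 1)) (Fin (L + 1)) ℂ :=
  Matrix.of fun i j =>
    ∑ t ∈ Finset.range (max (i : ℕ) (j : ℕ) + 1),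
      alphaC q L (min (i : ℕ) (j : ℕ)) (max (i : ℕ) (j : ℕ)) t *
        (Polynomial.Chebyshev.U ℂ
            ((min (i : ℕ) (j : ℕ) : ℤ) + (max (i : ℕ) (j : ℕ) : ℤ) - 2 * (t : ℤ))).eval x

/-- The antidiagonal involution `J`. -/
def Jm (L : ℕ) : Matrix (Fin (L + 1)) (Fin (L + 1)) ℂ :=
  Matrix.of fun i j => if (i : ℕ) + (j : ℕ) = L then 1 else 0

/-- The diagonal leading-coefficient matrix `Γ_n`. -/
def Gam (q : ℂ) (L n : ℕ) : Matrix (Fin (L + 1)) (Fin (L + 1)) ℂ :=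
  Matrix.diagonal fun i =>
    2 ^ n * q ^ n * qp (q ^ (2 * ((i : ℕ) : ℤ) + 2)) (q ^ 2) n *
        qp (q ^ (2 * (L : ℤ) - 2 * ((i : ℕ) : ℤ) + 2)) (q ^ 2) n /
      (qp (q ^ 2) (q ^ 2) n * qp (q ^ (2 * (L : ℤ) + 4)) (q ^ 2) n)

/-- The squared-norm matrix `G_m`. -/
def Gmat (q : ℂ) (L m : ℕ) : Matrix (Fin (L + 1)) (Fin (L + 1)) ℂ :=
  Matrix.diagonal fun i =>
    q ^ (2 * (m : ℤ) - (L : ℤ)) * (1 - q ^ (2 * (L : ℤ) + 2)) ^ 2 /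
      ((1 - q ^ (2 * (m : ℤ) + 2 * ((i : ℕ) : ℤ) + 2)) *
        (1 - q ^ (2 * (L : ℤ) - 2 * ((i : ℕ) : ℤ) + 2 * (m : ℤ) + 2)))

/-- The unipotent lower triangular matrix `L(x)` of the LDU decomposition. -/
def Lm (q : ℂ) (L : ℕ) (C : ℂ → ℂ → ℕ → Polynomial ℂ) (x : ℂ) :
    Matrix (Fin (L + 1)) (Fin (L + 1)) ℂ :=
  Matrix.of fun m k =>
    if (k : ℕ) ≤ (m : ℕ) then
      q ^ (((m : ℕ) : ℤ) - ((k : ℕ) : ℤ)) * qp (q ^ 2) (q ^ 2) (m : ℕ) *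
          qp (q ^ 2) (q ^ 2) (2 * (k : ℕ) + 1) /
          (qp (q ^ 2) (q ^ 2) ((m : ℕ) + (k : ℕ) + 1) * qp (q ^ 2) (q ^ 2) (k : ℕ)) *
        (C (q ^ 2) (q ^ (2 * (k : ℕ) + 2)) ((m : ℕ) - (k : ℕ))).eval x
    else 0

/-- The claimed inverse of `L(x)`. -/
def Linv (q : ℂ) (L : ℕ) (C : ℂ → ℂ → ℕ → Polynomial ℂ) (x : ℂ) :
    Matrix (Fin (L + 1)) (Fin (L + 1)) ℂ :=
  Matrix.of fun k n =>
    if (n : ℕ) ≤ (k : ℕ) then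
      q ^ ((2 * ((k : ℕ) : ℤ) + 1) * (((k : ℕ) : ℤ) - ((n : ℕ) : ℤ))) *
          qp (q ^ 2) (q ^ 2) (k : ℕ) * qp (q ^ 2) (q ^ 2) ((k : ℕ) + (n : ℕ)) /
          (qp (q ^ 2) (q ^ 2) (2 * (k : ℕ)) * qp (q ^ 2) (q ^ 2) (n : ℕ)) *
        (C (q ^ 2) (q ^ (-(2 * ((k : ℕ) : ℤ)))) ((k : ℕ) - (n : ℕ))).eval x
    else 0

/-- The constants `c_k(ℓ)`. -/
def ckC (q : ℂ) (L k : ℕ) : ℂ :=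
  q ^ (-(L : ℤ)) / 4 * (1 - q ^ (4 * k + 2)) * qp (q ^ 2) (q ^ 2) (L + k + 1) *
      qp (q ^ 2) (q ^ 2) (L - k) * qp (q ^ 2) (q ^ 2) k ^ 4 /
    (qp (q ^ 2) (q ^ 2) (2 * k + 1) ^ 2 * qp (q ^ 2) (q ^ 2) L ^ 2)

/-- The diagonal part `T(x)` of the LDU decomposition. -/
def Tm (q : ℂ) (L : ℕ) (x : ℂ) : Matrix (Fin (L + 1)) (Fin (L + 1)) ℂ :=
  Matrix.diagonal fun k =>
    ckC q L (k : ℕ) *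
      (4 * ∏ j ∈ Finset.Icc 1 (k : ℕ), (1 - 2 * (2 * x ^ 2 - 1) * q ^ (2 * j) + q ^ (4 * j)))

/-- The coefficient matrix `M₁(z)` of the q-difference operator `D₁`. -/
def M1f (q : ℂ) (L : ℕ) (z : ℂ) : Matrix (Fin (L + 1)) (Fin (L + 1)) ℂ :=
  Matrix.of fun i j =>
    if (j : ℕ) = (i : ℕ) + 1 then
      -(q ^ (1 - ((i : ℕ) : ℤ)) * (1 - q ^ (2 * (i : ℕ) + 2)) / (1 - q ^ 2) ^ 2 *
        (z / (1 - z ^ 2)))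
    else if (j : ℕ) = (i : ℕ) then
      q ^ (1 - ((i : ℕ) : ℤ)) / (1 - q ^ 2) ^ 2 *
        ((1 - q ^ (2 * (i : ℕ) + 2) * z ^ 2) / (1 - z ^ 2))
    else 0

/-- `M₂(z) = J M₁(z) J`. -/
def M2f (q : ℂ) (L : ℕ) (z : ℂ) : Matrix (Fin (L + 1)) (Fin (L + 1)) ℂ :=
  Jm L * M1f q L z * Jm L

/-- The eigenvalue matrix `Λ_n(1)`. -/
def Lam1 (q : ℂ) (L n : ℕ) : Matrix (Fin (L + 1)) (Fin (L + 1)) ℂ :=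
  Matrix.diagonal fun j =>
    (q ^ (-((j : ℕ) : ℤ) - (n : ℤ) - 1) + q ^ (((j : ℕ) : ℤ) + (n : ℤ) + 1)) / (q⁻¹ - q) ^ 2

/-- The eigenvalue matrix `Λ_n(2) = J Λ_n(1) J`. -/
def Lam2 (q : ℂ) (L n : ℕ) : Matrix (Fin (L + 1)) (Fin (L + 1)) ℂ :=
  Jm L * Lam1 q L n * Jm L

/-- The diagonal coefficient matrix `K₁(z)` of the decoupled operator. -/
def K1f (q : ℂ) (L : ℕ) (z : ℂ) : Matrix (Fin (L + 1)) (Fin (L + 1)) ℂ :=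
  Matrix.diagonal fun i =>
    q ^ (1 - ((i : ℕ) : ℤ)) / (1 - q ^ 2) ^ 2 *
      ((1 - q ^ (2 * (i : ℕ) + 2) * z ^ 2) / (1 - z ^ 2))

/-- The symmetric Laurent polynomial `Ĉ_k(z;β|p)`. -/
def Chat (p β : ℂ) (k : ℕ) (z : ℂ) : ℂ :=
  ∑ r ∈ Finset.range (k + 1),
    qp β p r * qp β p (k - r) / (qp p p r * qp p p (k - r)) * z ^ ((k : ℤ) - 2 * (r : ℤ))

/-- The matrix polynomials `R_n(x) = L(x)ᵀ P_n(x) Γ_n⁻¹`. -/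
def Rmat (q : ℂ) (L : ℕ) (C : ℂ → ℂ → ℕ → Polynomial ℂ) (n : ℕ) (x : ℂ) :
    Matrix (Fin (L + 1)) (Fin (L + 1)) ℂ :=
  (Lm q L C x)ᵀ * evP q L C n x * (Gam q L n)⁻¹

/-!
Everything rests on two factorisations of the `q`-binomial series
`φ_β(c) = ∑ (β;p)_n / (p;p)_n (c t)^n`, namely `φ_β(c) = (1 - β c t) φ_{pβ}(c)` and
`φ_β(p c) = (1 - c t) φ_{pβ}(c)`. The generating function of the continuous `q`-ultraspherical
polynomials is `U_β(z; t) = φ_β(z) φ_β(z⁻¹)`, so with `p = q²` each of `U_β(z; t)`, `U_β(z; p t)`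
and `U_β(q^{±1} z; q t)` is a quadratic polynomial in `t` times the same series `U_{pβ}(z; t)`.
Comparing these quadratics gives the second-order `q`-difference equation of the polynomials.

For the matrix `L(x)`, the product `U_β(t) U_{β⁻¹}(β t)` is invariant under `t ↦ p t`, hence equals
`1`; and `∑ (β² p^n;p)_M C_n t^n` is a polynomial of degree at most `M` times `U_{p^M β}`.
Multiplying by the inverse series leaves a polynomial of degree at most `M`, and the vanishing of
its coefficient of `t^{M+1}` says that the explicit candidate for `L(x)⁻¹` is an inverse.

The `i`-dependent part of the summands of `P_n(x)_{i,j}` is an entry of `(L(x)ᵀ)⁻¹`, so each entry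
of `L(x)ᵀ P_n(x)` is a multiple of a single `q`-ultraspherical polynomial, and the matrix equation
is the scalar `q`-difference equation entry by entry.
-/

theorem qp_succ (a p : ℂ) (n : ℕ) : qp a p (n + 1) = qp a p n * (1 - a * p ^ n) :=
  Finset.prod_range_succ _ _

theorem qp_succ_left (a p : ℂ) (n : ℕ) : qp a p (n + 1) = (1 - a) * qp (p * a) p n := by
  simp only [qp, Finset.prod_range_succ', pow_zero, mul_one]
  rw [mul_comm]
  exact congrArg _ (Finset.prod_congr rfl fun j _ ↦ by ring)

theorem qp_add (a p : ℂ) (m n : ℕ) : qp a p (m + n) = qp a p m * qp (a * p ^ m) p n := by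
  simp only [qp, Finset.prod_range_add, pow_add, mul_assoc]

theorem qp_self_ne_zero {p : ℂ} (hp : ¬ IsOfFinOrder p) (n : ℕ) : qp p p n ≠ 0 := by
  refine Finset.prod_ne_zero_iff.2 fun j _ h ↦ hp ?_
  exact isOfFinOrder_iff_pow_eq_one.2 ⟨j + 1, j.succ_pos, by linear_combination -h⟩

theorem Chat_zero (p β z : ℂ) : Chat p β 0 z = 1 := by
  simp [Chat, qp]

theorem IsUltra.eval_eq_Chat {C : ℂ → ℂ → ℕ → Polynomial ℂ} (hC : IsUltra C) (p β : ℂ) (n : ℕ)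
    {z : ℂ} (hz : z ≠ 0) : (C p β n).eval ((z + z⁻¹) / 2) = Chat p β n z :=
  (hC p β n).2 z hz

section LinFactor

open scoped PowerSeries
open PowerSeries (coeff rescale constantCoeff)

variable {R : Type*} [CommRing R]

/-- The linear power series `1 - c t`, the building block of all the generating functions below. -/
def linFactor (c : R) : R⟦X⟧ := 1 - PowerSeries.C c * PowerSeries.X

theorem coeff_zero_linFactor_mul (c : R) (f : R⟦X⟧) : coeff 0 (linFactor c * f) = coeff 0 f := by
  simp [linFactor, sub_mul, mul_assoc]

theorem coeff_succ_linFactor_mul (c : R) (f : R⟦X⟧) (n : ℕ) :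
    coeff (n + 1) (linFactor c * f) = coeff (n + 1) f - c * coeff n f := by
  simp [linFactor, sub_mul, mul_assoc, PowerSeries.coeff_succ_X_mul]

theorem linFactor_ne_zero [Nontrivial R] (c : R) : linFactor c ≠ 0 := fun h ↦ by
  simpa [h] using coeff_zero_linFactor_mul c 1

theorem rescale_linFactor (p c : R) : rescale p (linFactor c) = linFactor (p * c) := by
  simp only [linFactor, ← PowerSeries.rescale_X, map_sub, map_one, PowerSeries.rescale_rescale,
    mul_comm c]

theorem eq_C_of_rescale_eq_self [IsDomain R] {p : R} (hp : ¬ IsOfFinOrder p) {f : R⟦X⟧}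
    (hf : rescale p f = f) : f = PowerSeries.C (constantCoeff f) := by
  ext n
  rcases n with _ | n
  · simp
  have hn : p ^ (n + 1) ≠ 1 := fun h ↦ hp (isOfFinOrder_iff_pow_eq_one.2 ⟨n + 1, n.succ_pos, h⟩)
  have h : p ^ (n + 1) * coeff (n + 1) f = coeff (n + 1) f := by
    rw [← PowerSeries.coeff_rescale, hf]
  rw [PowerSeries.coeff_C, if_neg n.succ_ne_zero]
  exact (mul_left_eq_self₀.1 h).resolve_left hn

end LinFactor

section GeneratingFunctions

open scoped PowerSeries
open PowerSeries (coeff rescale constantCoeff)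

variable {p : ℂ}

/-- The `q`-binomial series `∑ (β;p)_n / (p;p)_n (c t)^n`, that is `(β c t;p)_∞ / (c t;p)_∞`, as a
formal power series in `t`. -/
def qBinomialSeries (p β c : ℂ) : ℂ⟦X⟧ :=
  PowerSeries.mk fun n ↦ qp β p n / qp p p n * c ^ n

theorem rescale_qBinomialSeries (p β c d : ℂ) :
    rescale d (qBinomialSeries p β c) = qBinomialSeries p β (d * c) := by
  ext n
  simp only [qBinomialSeries, PowerSeries.coeff_rescale, PowerSeries.coeff_mk]
  ring

theorem qBinomialSeries_eq_linFactor_mul (hp : ¬ IsOfFinOrder p) (β c : ℂ) :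
    qBinomialSeries p β c = linFactor (β * c) * qBinomialSeries p (p * β) c := by
  ext n
  rcases n with _ | n
  · simp [coeff_zero_linFactor_mul, qBinomialSeries, qp]
  have h := qp_self_ne_zero hp (n + 1)
  rw [qp_succ] at h
  obtain ⟨hn, hn'⟩ := mul_ne_zero_iff.1 h
  simp only [coeff_succ_linFactor_mul, qBinomialSeries, PowerSeries.coeff_mk, qp_succ_left β,
    qp_succ]
  field_simp
  ring

theorem qBinomialSeries_mul_arg (hp : ¬ IsOfFinOrder p) (β c : ℂ) :
    qBinomialSeries p β (p * c) = linFactor c * qBinomialSeries p (p * β) c := by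
  ext n
  rcases n with _ | n
  · simp [coeff_zero_linFactor_mul, qBinomialSeries, qp]
  have h := qp_self_ne_zero hp (n + 1)
  rw [qp_succ] at h
  obtain ⟨hn, hn'⟩ := mul_ne_zero_iff.1 h
  simp only [coeff_succ_linFactor_mul, qBinomialSeries, PowerSeries.coeff_mk, qp_succ_left β,
    qp_succ]
  field_simp
  ring

/-- The generating function `∑ Ĉ_n(z;β|p) t^n` of the continuous `q`-ultraspherical polynomials,
as a formal power series in `t`. -/
def ultraSeries (p β z : ℂ) : ℂ⟦X⟧ := PowerSeries.mk fun n ↦ Chat p β n z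

theorem coeff_ultraSeries (p β z : ℂ) (n : ℕ) : coeff n (ultraSeries p β z) = Chat p β n z :=
  PowerSeries.coeff_mk _ _

theorem ultraSeries_eq_mul (p β : ℂ) {z : ℂ} (hz : z ≠ 0) :
    ultraSeries p β z = qBinomialSeries p β z * qBinomialSeries p β z⁻¹ := by
  ext n
  rw [coeff_ultraSeries, Chat, mul_comm, PowerSeries.coeff_mul,
    Finset.Nat.sum_antidiagonal_eq_sum_range_succ_mk]
  refine Finset.sum_congr rfl fun r hr ↦ ?_
  have hr : r ≤ n := Nat.le_of_lt_succ (Finset.mem_range.1 hr)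
  have hexp : (n : ℤ) - 2 * r = (n - r : ℕ) - r := by omega
  simp only [qBinomialSeries, PowerSeries.coeff_mk]
  rw [hexp, zpow_sub₀ hz, zpow_natCast, zpow_natCast, inv_pow]
  ring

theorem ultraSeries_inv (p β : ℂ) {z : ℂ} (hz : z ≠ 0) :
    ultraSeries p β z⁻¹ = ultraSeries p β z := by
  rw [ultraSeries_eq_mul p β hz, ultraSeries_eq_mul p β (inv_ne_zero hz), inv_inv, mul_comm]

theorem ultraSeries_eq_linFactor_mul (hp : ¬ IsOfFinOrder p) (β : ℂ) {z : ℂ} (hz : z ≠ 0) :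
    ultraSeries p β z =
      linFactor (β * z) * linFactor (β * z⁻¹) * ultraSeries p (p * β) z := by
  rw [ultraSeries_eq_mul p β hz, ultraSeries_eq_mul p (p * β) hz,
    qBinomialSeries_eq_linFactor_mul hp β z, qBinomialSeries_eq_linFactor_mul hp β z⁻¹]
  ring

theorem rescale_ultraSeries (hp : ¬ IsOfFinOrder p) (β : ℂ) {z : ℂ} (hz : z ≠ 0) :
    rescale p (ultraSeries p β z) =
      linFactor z * linFactor z⁻¹ * ultraSeries p (p * β) z := by
  rw [ultraSeries_eq_mul p β hz, ultraSeries_eq_mul p (p * β) hz, map_mul,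
    rescale_qBinomialSeries, rescale_qBinomialSeries, qBinomialSeries_mul_arg hp,
    qBinomialSeries_mul_arg hp]
  ring

end GeneratingFunctions

section QDifference

open scoped PowerSeries
open PowerSeries (coeff rescale)

variable {q : ℂ}

theorem rescale_ultraSeries_mul_arg (hq0 : q ≠ 0) (hq : ¬ IsOfFinOrder (q ^ 2)) (β : ℂ) {z : ℂ}
    (hz : z ≠ 0) :
    rescale q (ultraSeries (q ^ 2) β (q * z)) =
      linFactor z * linFactor (β * z⁻¹) * ultraSeries (q ^ 2) (q ^ 2 * β) z := by
  have hqz : q * (q * z)⁻¹ = z⁻¹ := by field_simp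
  rw [ultraSeries_eq_mul _ _ (mul_ne_zero hq0 hz), ultraSeries_eq_mul _ _ hz, map_mul,
    rescale_qBinomialSeries, rescale_qBinomialSeries, hqz, ← mul_assoc q q z, ← sq,
    qBinomialSeries_mul_arg hq, qBinomialSeries_eq_linFactor_mul hq β z⁻¹]
  ring

theorem ultraSeries_qDifference (hq0 : q ≠ 0) (hq : ¬ IsOfFinOrder (q ^ 2)) (β : ℂ) {z : ℂ}
    (hz : z ≠ 0) :
    (1 - β * z ^ 2) • rescale q (ultraSeries (q ^ 2) β (q * z)) -
        (z ^ 2 - β) • rescale q (ultraSeries (q ^ 2) β (q⁻¹ * z)) =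
      (1 - z ^ 2) • (ultraSeries (q ^ 2) β z + β • rescale (q ^ 2) (ultraSeries (q ^ 2) β z)) := by
  have hinv : q⁻¹ * z = (q * z⁻¹)⁻¹ := by field_simp
  have hCz : PowerSeries.C z * PowerSeries.C z⁻¹ = 1 := by
    rw [← map_mul, mul_inv_cancel₀ hz, map_one]
  rw [hinv, ultraSeries_inv _ _ (mul_ne_zero hq0 (inv_ne_zero hz)),
    rescale_ultraSeries_mul_arg hq0 hq β hz, rescale_ultraSeries_mul_arg hq0 hq β (inv_ne_zero hz),
    rescale_ultraSeries hq β hz, ultraSeries_eq_linFactor_mul hq β hz,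
    ultraSeries_inv _ _ hz, inv_inv]
  simp only [PowerSeries.smul_eq_C_mul, linFactor, map_sub, map_mul, map_one, map_pow]
  linear_combination PowerSeries.C z * PowerSeries.X * (1 - PowerSeries.C β) ^ 2 *
    ultraSeries (q ^ 2) (q ^ 2 * β) z * hCz

theorem Chat_qDifference (hq0 : q ≠ 0) (hq : ¬ IsOfFinOrder (q ^ 2)) (β : ℂ) (n : ℕ) {z : ℂ}
    (hz : z ≠ 0) :
    (1 - β * z ^ 2) * Chat (q ^ 2) β n (q * z) - (z ^ 2 - β) * Chat (q ^ 2) β n (q⁻¹ * z) =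
      (1 - z ^ 2) * ((q ^ n)⁻¹ + β * q ^ n) * Chat (q ^ 2) β n z := by
  have h := congrArg (PowerSeries.coeff n) (ultraSeries_qDifference hq0 hq β hz)
  simp only [map_sub, map_add, PowerSeries.coeff_smul, PowerSeries.coeff_rescale,
    coeff_ultraSeries, smul_eq_mul] at h
  have hqn : q ^ n * (q ^ n)⁻¹ = 1 := mul_inv_cancel₀ (pow_ne_zero n hq0)
  refine mul_left_cancel₀ (pow_ne_zero n hq0) ?_
  linear_combination h - (1 - z ^ 2) * Chat (q ^ 2) β n z * hqn

end QDifference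

section Inversion

open scoped PowerSeries
open PowerSeries (coeff rescale constantCoeff)

variable {p : ℂ}

theorem ultraSeries_mul_rescale_inv (hp : ¬ IsOfFinOrder p) {β z : ℂ} (hβ : β ≠ 0) (hz : z ≠ 0) :
    ultraSeries p β z * rescale β (ultraSeries p β⁻¹ z) = 1 := by
  set Q : ℂ → ℂ⟦X⟧ := fun γ ↦ linFactor (γ * z) * linFactor (γ * z⁻¹) with hQ
  set U := ultraSeries p β z with hU
  set V := rescale β (ultraSeries p β⁻¹ z) with hV
  have hshift (γ : ℂ) : Q 1 * ultraSeries p γ z = Q γ * rescale p (ultraSeries p γ z) := by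
    rw [rescale_ultraSeries hp γ hz, ultraSeries_eq_linFactor_mul hp γ hz]
    simp only [hQ, one_mul]
    ring
  have hshiftV : Q β * V = Q 1 * rescale p V := by
    have h := congrArg (rescale β) (hshift β⁻¹)
    simp only [hQ, map_mul, rescale_linFactor, PowerSeries.rescale_rescale, one_mul,
      mul_inv_cancel_left₀ hβ] at h
    simpa only [hQ, hV, PowerSeries.rescale_rescale, one_mul, mul_comm β p] using h
  have hQ0 (γ : ℂ) : Q γ ≠ 0 := mul_ne_zero (linFactor_ne_zero _) (linFactor_ne_zero _)
  have hinvariant : rescale p (U * V) = U * V := by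
    refine mul_left_cancel₀ (mul_ne_zero (hQ0 1) (hQ0 β)) ?_
    rw [map_mul]
    linear_combination (-(Q β * V)) * hshift β - Q β * rescale p U * hshiftV
  have hconst : constantCoeff (U * V) = 1 := by
    rw [map_mul, ← PowerSeries.coeff_zero_eq_constantCoeff_apply,
      ← PowerSeries.coeff_zero_eq_constantCoeff_apply, hU, hV, PowerSeries.coeff_rescale,
      coeff_ultraSeries, coeff_ultraSeries, Chat_zero, Chat_zero, pow_zero, one_mul, one_mul]
  rw [eq_C_of_rescale_eq_self hp hinvariant, hconst, map_one]

theorem mk_qp_succ_mul (a : ℂ) (f : ℕ → ℂ) (M : ℕ) :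
    PowerSeries.mk (fun n ↦ qp (a * p ^ n) p (M + 1) * f n) =
      PowerSeries.mk (fun n ↦ qp (a * p ^ n) p M * f n) - PowerSeries.C (a * p ^ M) *
        rescale p (PowerSeries.mk fun n ↦ qp (a * p ^ n) p M * f n) := by
  ext n
  simp only [map_sub, PowerSeries.coeff_C_mul, PowerSeries.coeff_rescale, PowerSeries.coeff_mk,
    qp_succ]
  ring

theorem exists_eq_mul_ultraSeries (hp : ¬ IsOfFinOrder p) (β : ℂ) {z : ℂ} (hz : z ≠ 0) (M : ℕ) :
    ∃ S : ℂ⟦X⟧, (∀ n, M < n → coeff n S = 0) ∧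
      PowerSeries.mk (fun n ↦ qp (β ^ 2 * p ^ n) p M * Chat p β n z) =
        S * ultraSeries p (p ^ M * β) z := by
  induction M with
  | zero =>
    refine ⟨1, fun n hn ↦ by rw [PowerSeries.coeff_one, if_neg hn.ne'], ?_⟩
    simp [ultraSeries, qp]
  | succ M ih =>
    obtain ⟨S, hdeg, hS⟩ := ih
    set γ := p ^ M * β with hγ
    refine ⟨linFactor (γ * z) * (linFactor (γ * z⁻¹) * S) -
      PowerSeries.C (β ^ 2 * p ^ M) * (linFactor z * (linFactor z⁻¹ * rescale p S)),
      fun n hn ↦ ?_, ?_⟩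
    · obtain ⟨n, rfl⟩ : ∃ j, n = j + 2 := ⟨n - 2, by omega⟩
      simp only [map_sub, PowerSeries.coeff_C_mul, coeff_succ_linFactor_mul,
        PowerSeries.coeff_rescale, hdeg (n + 2) (by omega), hdeg (n + 1) (by omega)]
      rcases (show M ≤ n by omega).eq_or_lt with rfl | hMn
      · -- both terms have the top coefficient `β² p^(2M)` times that of `S`
        rw [hγ]
        field_simp
        ring
      · simp [hdeg n hMn]
    · rw [mk_qp_succ_mul, hS, map_mul (rescale p), rescale_ultraSeries hp γ hz,
        ultraSeries_eq_linFactor_mul hp γ hz, pow_succ' p M, mul_assoc p, ← hγ]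
      ring

theorem sum_antidiagonal_Chat_mul_Chat_inv (hp : ¬ IsOfFinOrder p) (hp0 : p ≠ 0) {β z : ℂ}
    (hβ : β ≠ 0) (hz : z ≠ 0) {M N : ℕ} (hMN : M < N) :
    ∑ ij ∈ Finset.HasAntidiagonal.antidiagonal N, qp (β ^ 2 * p ^ ij.1) p M * Chat p β ij.1 z *
      ((p ^ M * β) ^ ij.2 * Chat p (p ^ M * β)⁻¹ ij.2 z) = 0 := by
  obtain ⟨S, hdeg, hS⟩ := exists_eq_mul_ultraSeries hp β hz M
  set γ := p ^ M * β
  have hγ0 : γ ≠ 0 := mul_ne_zero (pow_ne_zero M hp0) hβ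
  have hprod : PowerSeries.mk (fun n ↦ qp (β ^ 2 * p ^ n) p M * Chat p β n z) *
      rescale γ (ultraSeries p γ⁻¹ z) = S := by
    rw [hS, mul_assoc, ultraSeries_mul_rescale_inv hp hγ0 hz, mul_one]
  have hcoeff := congrArg (PowerSeries.coeff N) hprod
  simpa only [PowerSeries.coeff_mul, PowerSeries.coeff_mk, PowerSeries.coeff_rescale,
    coeff_ultraSeries, hdeg N hMN] using hcoeff

end Inversion

section LowerTriangular

theorem sum_Icc_eq_sum_antidiagonal {M : Type*} [AddCommMonoid M] (f : ℕ → M) (a N : ℕ) :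
    ∑ m ∈ Finset.Icc a (a + N), f m =
      ∑ ij ∈ Finset.HasAntidiagonal.antidiagonal N, f (a + ij.1) := by
  rw [Finset.Nat.sum_antidiagonal_eq_sum_range_succ fun i _ ↦ f (a + i),
    ← Finset.Ico_add_one_right_eq_Icc, Finset.sum_Ico_eq_sum_range,
    show a + N + 1 - a = N.succ by omega]

theorem sum_fin_ite_mul_ite {R : Type*} [NonUnitalNonAssocSemiring R] (f g : ℕ → R) (L a b : ℕ) :
    ∑ m : Fin (L + 1), (if a ≤ (m : ℕ) then f m else 0) * (if (m : ℕ) ≤ b then g m else 0) =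
      ∑ m ∈ Finset.Icc a (min L b), f m * g m := by
  rw [Fin.sum_univ_eq_sum_range
    (fun m ↦ (if a ≤ m then f m else 0) * (if m ≤ b then g m else 0)) (L + 1)]
  have hfilter : Finset.Icc a (min L b) = {m ∈ Finset.range (L + 1) | a ≤ m ∧ m ≤ b} := by
    ext m
    simp only [Finset.mem_Icc, Finset.mem_filter, Finset.mem_range]
    omega
  rw [hfilter, Finset.sum_filter]
  refine Finset.sum_congr rfl fun m _ ↦ ?_
  by_cases ha : a ≤ m <;> by_cases hb : m ≤ b <;> simp [ha, hb]

variable {q : ℂ}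

/-- The scalar factor of the `(m,k)` entry of `L(x)`. -/
def lmCoeff (q : ℂ) (m k : ℕ) : ℂ :=
  q ^ ((m : ℤ) - (k : ℤ)) * qp (q ^ 2) (q ^ 2) m * qp (q ^ 2) (q ^ 2) (2 * k + 1) /
    (qp (q ^ 2) (q ^ 2) (m + k + 1) * qp (q ^ 2) (q ^ 2) k)

/-- The scalar factor of the `(k,n)` entry of `L(x)⁻¹`. -/
def linvCoeff (q : ℂ) (k n : ℕ) : ℂ :=
  q ^ ((2 * (k : ℤ) + 1) * ((k : ℤ) - (n : ℤ))) *
      qp (q ^ 2) (q ^ 2) k * qp (q ^ 2) (q ^ 2) (k + n) /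
    (qp (q ^ 2) (q ^ 2) (2 * k) * qp (q ^ 2) (q ^ 2) n)

theorem lmCoeff_self (hq : ¬ IsOfFinOrder (q ^ 2)) (k : ℕ) : lmCoeff q k k = 1 := by
  have hk := qp_self_ne_zero hq k
  have hk' := qp_self_ne_zero hq (2 * k + 1)
  rw [lmCoeff, sub_self, zpow_zero, one_mul, ← two_mul, mul_comm, div_self (mul_ne_zero hk' hk)]

theorem linvCoeff_self (hq : ¬ IsOfFinOrder (q ^ 2)) (k : ℕ) : linvCoeff q k k = 1 := by
  have hk := qp_self_ne_zero hq k
  have hk' := qp_self_ne_zero hq (2 * k)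
  rw [linvCoeff, sub_self, mul_zero, zpow_zero, one_mul, ← two_mul, mul_comm,
    div_self (mul_ne_zero hk' hk)]

theorem linvCoeff_mul_lmCoeff (hq0 : q ≠ 0) (hq : ¬ IsOfFinOrder (q ^ 2)) (a : ℕ) {M s t : ℕ}
    (hst : s + t = M + 1) :
    linvCoeff q (a + (M + 1)) (a + s) * lmCoeff q (a + s) a =
      q ^ (M + 1) * qp (q ^ 2) (q ^ 2) (a + (M + 1)) * qp (q ^ 2) (q ^ 2) (2 * a + 1) /
          (qp (q ^ 2) (q ^ 2) (2 * (a + (M + 1))) * qp (q ^ 2) (q ^ 2) a) *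
        (qp (((q ^ 2) ^ (a + 1)) ^ 2 * (q ^ 2) ^ s) (q ^ 2) M *
          ((q ^ 2) ^ M * (q ^ 2) ^ (a + 1)) ^ t) := by
  have hpow : q ^ ((2 * ((a + (M + 1) : ℕ) : ℤ) + 1) * ((a + (M + 1) : ℕ) - (a + s : ℕ))) *
      q ^ (((a + s : ℕ) : ℤ) - a) = q ^ (M + 1) * ((q ^ 2) ^ M * (q ^ 2) ^ (a + 1)) ^ t := by
    have hs : (s : ℤ) = M + 1 - t := by omega
    have hexp : q ^ (M + 1) * ((q ^ 2) ^ M * (q ^ 2) ^ (a + 1)) ^ t =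
        q ^ (M + 1 + 2 * (a + M + 1) * t) := by ring
    rw [hexp, ← zpow_natCast, ← zpow_add₀ hq0]
    congr 1
    push_cast
    rw [hs]
    ring
  have hsplit : qp (q ^ 2) (q ^ 2) (a + (M + 1) + (a + s)) =
      qp (q ^ 2) (q ^ 2) (a + s + a + 1) *
        qp (((q ^ 2) ^ (a + 1)) ^ 2 * (q ^ 2) ^ s) (q ^ 2) M := by
    rw [show a + (M + 1) + (a + s) = a + s + a + 1 + M by omega, qp_add]
    congr 2
    ring
  have hs := qp_self_ne_zero hq (a + s)
  have hs' := qp_self_ne_zero hq (a + s + a + 1)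
  have hk := qp_self_ne_zero hq (2 * (a + (M + 1)))
  have ha := qp_self_ne_zero hq a
  rw [linvCoeff, lmCoeff, hsplit]
  field_simp
  linear_combination qp (q ^ 2) (q ^ 2) (a + (M + 1)) * qp (q ^ 2) (q ^ 2) (2 * a + 1) *
    qp (((q ^ 2) ^ (a + 1)) ^ 2 * (q ^ 2) ^ s) (q ^ 2) M * hpow

theorem sum_Icc_linvCoeff_mul_lmCoeff (hq0 : q ≠ 0) (hq : ¬ IsOfFinOrder (q ^ 2)) {z : ℂ}
    (hz : z ≠ 0) {a k : ℕ} (hak : a < k) :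
    ∑ m ∈ Finset.Icc a k,
      (lmCoeff q m a * Chat (q ^ 2) (q ^ (2 * a + 2)) (m - a) z) *
        (linvCoeff q k m * Chat (q ^ 2) (q ^ (-(2 * (k : ℤ)))) (k - m) z) = 0 := by
  obtain ⟨M, rfl⟩ : ∃ M, k = a + (M + 1) := ⟨k - (a + 1), by omega⟩
  have hlower : q ^ (2 * a + 2) = (q ^ 2) ^ (a + 1) := by ring
  have hupper : q ^ (-(2 * ((a + (M + 1) : ℕ) : ℤ))) = ((q ^ 2) ^ M * (q ^ 2) ^ (a + 1))⁻¹ := by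
    rw [_root_.zpow_neg]
    congr 1
    norm_cast
    ring
  have hp0 : q ^ 2 ≠ 0 := pow_ne_zero 2 hq0
  have hsum := sum_antidiagonal_Chat_mul_Chat_inv hq hp0 (pow_ne_zero (a + 1) hp0) hz M.lt_succ_self
  rw [sum_Icc_eq_sum_antidiagonal, hlower, hupper,
    ← mul_zero (q ^ (M + 1) * qp (q ^ 2) (q ^ 2) (a + (M + 1)) * qp (q ^ 2) (q ^ 2) (2 * a + 1) /
      (qp (q ^ 2) (q ^ 2) (2 * (a + (M + 1))) * qp (q ^ 2) (q ^ 2) a)),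
    ← hsum, Finset.mul_sum]
  refine Finset.sum_congr rfl fun ⟨s, t⟩ hst ↦ ?_
  have hst : s + t = M + 1 := Finset.HasAntidiagonal.mem_antidiagonal.1 hst
  rw [mul_mul_mul_comm, mul_comm (lmCoeff _ _ _), linvCoeff_mul_lmCoeff hq0 hq a hst,
    show a + (M + 1) - (a + s) = t by omega, Nat.add_sub_cancel_left]
  ring

theorem transpose_Lm_mul_transpose_Linv (hq0 : q ≠ 0) (hq : ¬ IsOfFinOrder (q ^ 2)) (L : ℕ)
    {C : ℂ → ℂ → ℕ → Polynomial ℂ} (hC : IsUltra C) {z : ℂ} (hz : z ≠ 0) :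
    (Lm q L C ((z + z⁻¹) / 2))ᵀ * (Linv q L C ((z + z⁻¹) / 2))ᵀ = 1 := by
  ext a k
  have hentry : ((Lm q L C ((z + z⁻¹) / 2))ᵀ * (Linv q L C ((z + z⁻¹) / 2))ᵀ) a k =
      ∑ m ∈ Finset.Icc (a : ℕ) (min L k),
        (lmCoeff q m a * Chat (q ^ 2) (q ^ (2 * (a : ℕ) + 2)) (m - a) z) *
          (linvCoeff q k m * Chat (q ^ 2) (q ^ (-(2 * ((k : ℕ) : ℤ)))) (k - m) z) := by
    simp only [← sum_fin_ite_mul_ite, ← hC.eval_eq_Chat _ _ _ hz]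
    rfl
  rw [hentry, min_eq_right (Nat.le_of_lt_succ k.isLt)]
  rcases lt_trichotomy (a : ℕ) k with h | h | h
  · rw [sum_Icc_linvCoeff_mul_lmCoeff hq0 hq hz h, Matrix.one_apply_ne (Fin.ne_of_lt h)]
  · obtain rfl : a = k := Fin.ext h
    simp [lmCoeff_self hq, linvCoeff_self hq, Chat_zero]
  · rw [Finset.Icc_eq_empty_of_lt h, Finset.sum_empty, Matrix.one_apply_ne (Fin.ne_of_gt h)]

end LowerTriangular

section Decoupling

variable {q : ℂ}

/-- The scalar factor of the `(k,j)` entry of `L(x)ᵀ P_n(x)`: the part of the summand of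
`P_n(x)_{i,j}` that does not depend on `i`. -/
def decoupledCoeff (q : ℂ) (L n k j : ℕ) : ℂ :=
  (-1 : ℂ) ^ k *
    q ^ ((n : ℤ) + (j : ℤ) * (2 * (k : ℤ) + 1) + 2 * (k : ℤ) * ((L : ℤ) + (n : ℤ) + 1) -
        (k : ℤ) ^ 2) *
    (qp (q ^ (-(2 * (L : ℤ)))) (q ^ 2) k * qp (q ^ (-(2 * (j : ℤ) + 2 * (n : ℤ)))) (q ^ 2) k /
      (qp (q ^ 2) (q ^ 2) k * qp (q ^ (2 * (L : ℤ) + 4)) (q ^ 2) k)) *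
    (qp (q ^ 2) (q ^ 2) (n + j - k) / qp (q ^ (4 * (k : ℤ) + 4)) (q ^ 2) (n + j - k)) *
    qRacah (q ^ 2) 1 1 (q ^ (-(2 * (n : ℤ) + 2 * (j : ℤ) + 2))) (q ^ (-(2 * (L : ℤ) + 2))) k j

/-- The matrix `L(x)ᵀ P_n(x)`, whose entries are multiples of single `q`-ultraspherical
polynomials. It vanishes for `k > n + j`, where the degree `n + j - k` would truncate. -/
def decoupledMatrix (q : ℂ) (L : ℕ) (C : ℂ → ℂ → ℕ → Polynomial ℂ) (n : ℕ) (x : ℂ) :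
    Matrix (Fin (L + 1)) (Fin (L + 1)) ℂ :=
  Matrix.of fun k j ↦
    if (k : ℕ) ≤ n + (j : ℕ) then
      decoupledCoeff q L n k j *
        (C (q ^ 2) (q ^ (2 * ((k : ℕ) : ℤ) + 2)) (n + (j : ℕ) - (k : ℕ))).eval x
    else 0

theorem evP_eq_transpose_Linv_mul (hq0 : q ≠ 0) (L : ℕ) (C : ℂ → ℂ → ℕ → Polynomial ℂ) (n : ℕ)
    (x : ℂ) : evP q L C n x = (Linv q L C x)ᵀ * decoupledMatrix q L C n x := by
  ext i j
  have hentry : ((Linv q L C x)ᵀ * decoupledMatrix q L C n x) i j =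
      ∑ k ∈ Finset.Icc (i : ℕ) (min L (n + (j : ℕ))),
        (linvCoeff q k i * (C (q ^ 2) (q ^ (-(2 * (k : ℤ)))) (k - (i : ℕ))).eval x) *
          (decoupledCoeff q L n k j *
            (C (q ^ 2) (q ^ (2 * (k : ℤ) + 2)) (n + (j : ℕ) - k)).eval x) := by
    rw [← sum_fin_ite_mul_ite]
    rfl
  rw [hentry, evP, Pm, Matrix.map_apply, Matrix.of_apply, Polynomial.eval_finsetSum]
  refine Finset.sum_congr rfl fun k _ ↦ ?_
  have hpow : q ^ ((n : ℤ) + (2 * (k : ℤ) + 1) * ((k : ℤ) - ((i : ℕ) : ℤ)) +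
        ((j : ℕ) : ℤ) * (2 * (k : ℤ) + 1) + 2 * (k : ℤ) * ((L : ℤ) + (n : ℤ) + 1) - (k : ℤ) ^ 2) =
      q ^ ((2 * (k : ℤ) + 1) * ((k : ℤ) - ((i : ℕ) : ℤ))) *
        q ^ ((n : ℤ) + ((j : ℕ) : ℤ) * (2 * (k : ℤ) + 1) +
          2 * (k : ℤ) * ((L : ℤ) + (n : ℤ) + 1) - (k : ℤ) ^ 2) := by
    rw [← zpow_add₀ hq0]
    congr 1
    ring
  rw [Polynomial.eval_mul, Polynomial.eval_mul, Polynomial.eval_C, hpow, linvCoeff, decoupledCoeff]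
  ring

theorem Rmat_eq_decoupledMatrix_mul (hq0 : q ≠ 0) (hq : ¬ IsOfFinOrder (q ^ 2)) (L : ℕ)
    {C : ℂ → ℂ → ℕ → Polynomial ℂ} (hC : IsUltra C) (n : ℕ) {z : ℂ} (hz : z ≠ 0) :
    Rmat q L C n ((z + z⁻¹) / 2) =
      decoupledMatrix q L C n ((z + z⁻¹) / 2) * (Gam q L n)⁻¹ := by
  rw [Rmat, evP_eq_transpose_Linv_mul hq0, ← Matrix.mul_assoc,
    transpose_Lm_mul_transpose_Linv hq0 hq L hC hz, Matrix.one_mul]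

theorem K1f_entry_qDifference (hq0 : q ≠ 0) (hq : ¬ IsOfFinOrder (q ^ 2)) {z : ℂ} (hz : z ≠ 0)
    (hz2 : z ^ 2 ≠ 1) {k m : ℕ} (hkm : k ≤ m) :
    q ^ (1 - (k : ℤ)) / (1 - q ^ 2) ^ 2 * ((1 - q ^ (2 * k + 2) * z ^ 2) / (1 - z ^ 2)) *
          Chat (q ^ 2) (q ^ (2 * k + 2)) (m - k) (q * z) +
        q ^ (1 - (k : ℤ)) / (1 - q ^ 2) ^ 2 *
            ((1 - q ^ (2 * k + 2) * z⁻¹ ^ 2) / (1 - z⁻¹ ^ 2)) *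
          Chat (q ^ 2) (q ^ (2 * k + 2)) (m - k) (q⁻¹ * z) =
      (q ^ (-(m : ℤ) - 1) + q ^ ((m : ℤ) + 1)) / (q⁻¹ - q) ^ 2 *
        Chat (q ^ 2) (q ^ (2 * k + 2)) (m - k) z := by
  obtain ⟨N, rfl⟩ := Nat.exists_eq_add_of_le hkm
  rw [Nat.add_sub_cancel_left]
  have hdiff := Chat_qDifference hq0 hq (q ^ (2 * k + 2)) N hz
  have hz1 : 1 - z ^ 2 ≠ 0 := sub_ne_zero.2 hz2.symm
  have hinv : (1 - q ^ (2 * k + 2) * z⁻¹ ^ 2) / (1 - z⁻¹ ^ 2) =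
      -((z ^ 2 - q ^ (2 * k + 2)) / (1 - z ^ 2)) := by
    rw [← mul_div_mul_left _ _ (pow_ne_zero 2 hz), ← div_neg]
    congr 1 <;> field_simp
    ring
  have hprefactor : q ^ (1 - (k : ℤ)) / (1 - q ^ 2) ^ 2 * ((q ^ N)⁻¹ + q ^ (2 * k + 2) * q ^ N) =
      (q ^ (-((k + N : ℕ) : ℤ) - 1) + q ^ (((k + N : ℕ) : ℤ) + 1)) / (q⁻¹ - q) ^ 2 := by
    have hq2 : 1 - q ^ 2 ≠ 0 := fun h ↦ hq (by rw [← sub_eq_zero.1 h]; exact IsOfFinOrder.one)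
    have hsub : (q⁻¹ - q) ^ 2 = (1 - q ^ 2) ^ 2 / q ^ 2 := by field_simp
    rw [hsub, zpow_sub₀ hq0, zpow_sub₀ hq0, zpow_add₀ hq0, _root_.zpow_neg, zpow_one,
      zpow_natCast, zpow_natCast]
    field_simp
    ring
  have hcancel : (1 - z ^ 2) / (1 - z ^ 2) = 1 := div_self hz1
  rw [hinv, ← hprefactor]
  linear_combination q ^ (1 - (k : ℤ)) / (1 - q ^ 2) ^ 2 * (hdiff / (1 - z ^ 2) +
    ((q ^ N)⁻¹ + q ^ (2 * k + 2) * q ^ N) * Chat (q ^ 2) (q ^ (2 * k + 2)) N z * hcancel)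

theorem decoupledMatrix_qDifference (hq0 : q ≠ 0) (hq : ¬ IsOfFinOrder (q ^ 2)) (L : ℕ)
    {C : ℂ → ℂ → ℕ → Polynomial ℂ} (hC : IsUltra C) (n : ℕ) {z : ℂ} (hz : z ≠ 0)
    (hz2 : z ^ 2 ≠ 1) :
    K1f q L z * decoupledMatrix q L C n ((q * z + (q * z)⁻¹) / 2) +
        K1f q L z⁻¹ * decoupledMatrix q L C n ((q⁻¹ * z + (q⁻¹ * z)⁻¹) / 2) =
      decoupledMatrix q L C n ((z + z⁻¹) / 2) * Lam1 q L n := by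
  ext k j
  simp only [Matrix.add_apply, K1f, Lam1, Matrix.diagonal_mul, Matrix.mul_diagonal,
    decoupledMatrix, Matrix.of_apply, hC.eval_eq_Chat _ _ _ hz,
    hC.eval_eq_Chat _ _ _ (mul_ne_zero hq0 hz),
    hC.eval_eq_Chat _ _ _ (mul_ne_zero (inv_ne_zero hq0) hz)]
  split_ifs with hkj
  · have hparam : q ^ (2 * ((k : ℕ) : ℤ) + 2) = q ^ (2 * (k : ℕ) + 2) := by norm_cast
    have hlow : -((j : ℕ) : ℤ) - (n : ℤ) - 1 = -((n + j : ℕ) : ℤ) - 1 := by push_cast; ring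
    have hhigh : ((j : ℕ) : ℤ) + (n : ℤ) + 1 = ((n + j : ℕ) : ℤ) + 1 := by push_cast; ring
    rw [hparam, hlow, hhigh]
    linear_combination decoupledCoeff q L n k j * K1f_entry_qDifference hq0 hq hz hz2 hkj
  · simp

end Decoupling

theorem not_isOfFinOrder_ofReal {q : ℝ} (hq0 : 0 < q) (hq1 : q < 1) :
    ¬ IsOfFinOrder (q : ℂ) := fun h ↦
  hq1.ne (by simpa [abs_of_pos hq0] using h.norm_eq_one)

theorem stmt12_general (q : ℂ) (hq0 : q ≠ 0) (hq : ¬ IsOfFinOrder q) (L : ℕ)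
    (C : ℂ → ℂ → ℕ → Polynomial ℂ) (hC : IsUltra C) (n : ℕ)
    (z : ℂ) (hz0 : z ≠ 0) (hz1 : z ≠ 1) (hz2 : z ≠ -1) :
    K1f q L z * Rmat q L C n ((q * z + (q * z)⁻¹) / 2) +
        K1f q L z⁻¹ * Rmat q L C n ((q⁻¹ * z + (q⁻¹ * z)⁻¹) / 2) =
      Rmat q L C n ((z + z⁻¹) / 2) * Lam1 q L n := by
  have hqsq : ¬ IsOfFinOrder (q ^ 2) := fun h ↦ hq (h.of_pow two_ne_zero)
  have hzsq : z ^ 2 ≠ 1 := sq_ne_one_iff.2 ⟨hz1, hz2⟩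
  have hcomm : (Gam q L n)⁻¹ * Lam1 q L n = Lam1 q L n * (Gam q L n)⁻¹ := by
    rw [Gam, Matrix.inv_diagonal]
    exact Matrix.commute_diagonal _ _
  rw [Rmat_eq_decoupledMatrix_mul hq0 hqsq L hC n hz0,
    Rmat_eq_decoupledMatrix_mul hq0 hqsq L hC n (mul_ne_zero hq0 hz0),
    Rmat_eq_decoupledMatrix_mul hq0 hqsq L hC n (mul_ne_zero (inv_ne_zero hq0) hz0),
    Matrix.mul_assoc (decoupledMatrix _ _ _ _ _), hcomm, ← Matrix.mul_assoc, ← Matrix.mul_assoc,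
    ← Matrix.mul_assoc, ← Matrix.add_mul, decoupledMatrix_qDifference hq0 hqsq L hC n hz0 hzsq]

/-- conjugation by `L(x)ᵀ` decouples the first q-difference operator:
`K₁(z) R_n(μ(qz)) + K₁(z⁻¹) R_n(μ(q⁻¹z)) = R_n(μ(z)) Λ_n(1)` where
`R_n(x) = L(x)ᵀ P_n(x) Γ_n⁻¹`. -/
theorem stmt12 (q : ℝ) (hq0 : 0 < q) (hq1 : q < 1) (L : ℕ)
    (C : ℂ → ℂ → ℕ → Polynomial ℂ) (hC : IsUltra C) (n : ℕ)
    (z : ℂ) (hz0 : z ≠ 0) (hz1 : z ≠ 1) (hz2 : z ≠ -1) :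
    K1f (q : ℂ) L z * Rmat (q : ℂ) L C n (((q : ℂ) * z + ((q : ℂ) * z)⁻¹) / 2) +
        K1f (q : ℂ) L z⁻¹ *
          Rmat (q : ℂ) L C n (((q : ℂ)⁻¹ * z + ((q : ℂ)⁻¹ * z)⁻¹) / 2) =
      Rmat (q : ℂ) L C n ((z + z⁻¹) / 2) * Lam1 (q : ℂ) L n := by
  exact stmt12_general q (by exact_mod_cast hq0.ne') (not_isOfFinOrder_ofReal hq0 hq1) L C hC n z
    hz0 hz1 hz2

end
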